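/- Suppose (m,p), (m̃,p̃) are KHK-related for the first Clebsch flow, and (m̃,p̃), (m̿,p̿) are also KHK-related. Then C1(p,p̃)·(m̿1p1 − m1p̿1) + C2(p,p̃)·(m̿2p2 − m2p̿2) + C3(p,p̃)·(m̿3p3 − m3p̿3) = 0; that is, the second order discrete Wronskians Wᵢ⁽²⁾ = m̿ᵢpᵢ − mᵢp̿ᵢ, i = 1,2,3, satisfy a linear relation with coefficients (C1(p,p̃), C2(p,p̃), C3(p,p̃)). -/

import Mathlib

/-!
Write the relation as `n - m = ε (p × Aq + q × Ap)`, `q - p = ε (p × n + q × m)` with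
`A = diag(ω₁, ω₂, ω₃)`, and center two consecutive steps `(m, p)`, `(n, q)`, `(u, v)` at the middle
one. Reversing time turns `(n, q) → (u, v)` into `(n, q) → (m, p)` with `-ε` for `ε`, so each fact
about the next point gives one about the previous point. Put `C = diag(C₁, C₂, C₃)` at `(p, q)`.

Eliminating the next momentum expresses the motion of `q` as a generalized Cayley transform,
`D (v - q) = ε (v + q) × n₊` and `D (p - q) = -ε (p + q) × n₋`, where
`n± = n ± ε q × Aq` and `D = (1 - ε² q·Aq) 1 + ε² |q|² A`.
With `s = (p + q)·Dq` and `t = (v + q)·Dq` there follow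

* `|q|² (p·u - v·m) = (q·p) (v + q)·n₋ - (q·v) (p + q)·n₊`,
* `|q|² (Dp·u - Dv·m) = s (v + q)·n₋ - t (p + q)·n₊`.

Since `|q|² C = s 1 - (q·p) D`, the terms in `n₋` cancel in `|q|⁴ (Cp·u - Cv·m)`, leaving
`(q·p) t - (q·v) s` times `(p + q)·n₊`; and `(q·p) t = (q·v) s` is a conservation law of the map.
If `q = 0`, then `v = ε v × n` is orthogonal to itself, so `v = 0`, and likewise `p = 0`.
-/

/-- `(m,p)` and `(n,q)` are KHK-related for the first Clebsch flow. -/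
def Clebsch1KHK (ε ω1 ω2 ω3 m1 m2 m3 p1 p2 p3 n1 n2 n3 q1 q2 q3 : ℝ) : Prop :=
  n1 - m1 = ε * (ω3 - ω2) * (q2 * p3 + p2 * q3) ∧
  n2 - m2 = ε * (ω1 - ω3) * (q3 * p1 + p3 * q1) ∧
  n3 - m3 = ε * (ω2 - ω1) * (q1 * p2 + p1 * q2) ∧
  q1 - p1 = ε * (n3 * p2 + m3 * q2) - ε * (n2 * p3 + m2 * q3) ∧
  q2 - p2 = ε * (n1 * p3 + m1 * q3) - ε * (n3 * p1 + m3 * q1) ∧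
  q3 - p3 = ε * (n2 * p1 + m2 * q1) - ε * (n1 * p2 + m1 * q2)

def C1 (ε ω1 ω2 ω3 p1 p2 p3 q1 q2 q3 : ℝ) : ℝ :=
  1 + ε ^ 2 * (ω2 - ω1) * p2 * q2 + ε ^ 2 * (ω3 - ω1) * p3 * q3
def C2 (ε ω1 ω2 ω3 p1 p2 p3 q1 q2 q3 : ℝ) : ℝ :=
  1 + ε ^ 2 * (ω1 - ω2) * p1 * q1 + ε ^ 2 * (ω3 - ω2) * p3 * q3
def C3 (ε ω1 ω2 ω3 p1 p2 p3 q1 q2 q3 : ℝ) : ℝ :=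
  1 + ε ^ 2 * (ω1 - ω3) * p1 * q1 + ε ^ 2 * (ω2 - ω3) * p2 * q2

open Matrix

/-- The Kahan–Hirota–Kimura discretization, with time step `2 * ε`, of the first Clebsch flow
`m' = p × A p`, `p' = p × m` with an arbitrary matrix `A` in place of `diag(ω₁, ω₂, ω₃)`: the point
`(m, p)` is related to `(n, q)`. -/
structure IsKHKStep {R : Type*} [CommRing R] (ε : R) (A : Matrix (Fin 3) (Fin 3) R)
    (m p n q : Fin 3 → R) : Prop where
  momentum : n - m = ε • (p ⨯₃ (A *ᵥ q) + q ⨯₃ (A *ᵥ p))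
  position : q - p = ε • (p ⨯₃ n + q ⨯₃ m)

/-- The matrix, in the pencil spanned by `1` and `A`, of coefficients of the Wronskian relation:
for `A = diag(ω₁, ω₂, ω₃)` it is `diag(C₁, C₂, C₃)`. -/
def wronskianPencil {R : Type*} [CommRing R] (ε : R) (A : Matrix (Fin 3) (Fin 3) R)
    (x y : Fin 3 → R) : Matrix (Fin 3) (Fin 3) R :=
  (1 + ε ^ 2 * (x ⬝ᵥ A *ᵥ y)) • 1 - (ε ^ 2 * (x ⬝ᵥ y)) • A

/-- The matrix `D` of the generalized Cayley transform `D (v - q) = ε (v + q) × n'` from a position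
`q` to the next position `v`, with `n'` the half-step momentum. It is the Wronskian pencil at
`(-q, q)`. -/
def cayleyMatrix {R : Type*} [CommRing R] (ε : R) (A : Matrix (Fin 3) (Fin 3) R)
    (q : Fin 3 → R) : Matrix (Fin 3) (Fin 3) R :=
  (1 - ε ^ 2 * (q ⬝ᵥ A *ᵥ q)) • 1 + (ε ^ 2 * (q ⬝ᵥ q)) • A

/-- The momentum after an explicit Euler step of length `ε`, half the time step `2 * ε` of
`IsKHKStep`. -/
def halfStepMomentum {R : Type*} [CommRing R] (ε : R) (A : Matrix (Fin 3) (Fin 3) R)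
    (n q : Fin 3 → R) : Fin 3 → R :=
  n + ε • (q ⨯₃ (A *ᵥ q))

section CommRing

variable {R : Type*} [CommRing R] {ε : R} {A : Matrix (Fin 3) (Fin 3) R}
  {m p n q u v : Fin 3 → R}

theorem dotProduct_mulVec_comm_of_isSymm {ι : Type*} [Fintype ι] {B : Matrix ι ι R}
    (hB : B.IsSymm) (x y : ι → R) :
    x ⬝ᵥ B *ᵥ y = y ⬝ᵥ B *ᵥ x := by
  rw [← dotProduct_transpose_mulVec, hB.eq]

theorem dotProduct_cross_swap (x y z : Fin 3 → R) : x ⬝ᵥ y ⨯₃ z = -(y ⬝ᵥ x ⨯₃ z) := by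
  rw [triple_product_permutation, ← cross_anticomm, dotProduct_neg]

theorem wronskianPencil_mulVec (x y z : Fin 3 → R) :
    wronskianPencil ε A x y *ᵥ z =
      (1 + ε ^ 2 * (x ⬝ᵥ A *ᵥ y)) • z - (ε ^ 2 * (x ⬝ᵥ y)) • A *ᵥ z := by
  simp only [wronskianPencil, sub_mulVec, smul_mulVec, one_mulVec]

theorem cayleyMatrix_mulVec (q z : Fin 3 → R) :
    cayleyMatrix ε A q *ᵥ z = (1 - ε ^ 2 * (q ⬝ᵥ A *ᵥ q)) • z + (ε ^ 2 * (q ⬝ᵥ q)) • A *ᵥ z := by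
  simp only [cayleyMatrix, add_mulVec, smul_mulVec, one_mulVec]

theorem cayleyMatrix_neg (q : Fin 3 → R) : cayleyMatrix (-ε) A q = cayleyMatrix ε A q := by
  simp only [cayleyMatrix, neg_sq]

theorem dotProduct_self_smul_wronskianPencil_mulVec (ε : R) (A : Matrix (Fin 3) (Fin 3) R)
    (p q z : Fin 3 → R) :
    (q ⬝ᵥ q) • (wronskianPencil ε A p q *ᵥ z) =
      ((p + q) ⬝ᵥ cayleyMatrix ε A q *ᵥ q) • z - (q ⬝ᵥ p) • (cayleyMatrix ε A q *ᵥ z) := by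
  simp only [wronskianPencil_mulVec, cayleyMatrix_mulVec, add_dotProduct, dotProduct_add,
    dotProduct_smul, smul_eq_mul, dotProduct_comm p q]
  module

theorem dotProduct_halfStepMomentum_sub (ε : R) (A : Matrix (Fin 3) (Fin 3) R)
    (n q x : Fin 3 → R) :
    ε * (q ⬝ᵥ q) * (x ⬝ᵥ halfStepMomentum ε A n q - x ⬝ᵥ n) =
      x ⬝ᵥ q ⨯₃ (cayleyMatrix ε A q *ᵥ q) := by
  simp only [halfStepMomentum, cayleyMatrix_mulVec, map_add, map_smul,
    cross_self, dotProduct_add, dotProduct_smul, dotProduct_zero, smul_eq_mul]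
  ring

theorem self_dotProduct_halfStepMomentum : q ⬝ᵥ halfStepMomentum ε A n q = q ⬝ᵥ n := by
  simp only [halfStepMomentum, dotProduct_add, dotProduct_smul, dot_self_cross, smul_zero, add_zero]

theorem cayleyMatrix_mulVec_dotProduct_halfStepMomentum (δ : R) :
    (cayleyMatrix ε A q *ᵥ q) ⬝ᵥ halfStepMomentum δ A n q = (cayleyMatrix ε A q *ᵥ q) ⬝ᵥ n := by
  simp only [halfStepMomentum, cayleyMatrix_mulVec, add_dotProduct, smul_dotProduct,
    dotProduct_add, dotProduct_smul, dot_self_cross, dot_cross_self, smul_zero, add_zero]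

namespace IsKHKStep

theorem symm (h : IsKHKStep ε A m p n q) : IsKHKStep (-ε) A n q m p where
  momentum := by linear_combination (norm := module) -h.momentum
  position := by linear_combination (norm := module) -h.position

theorem dotProduct_position_sub (h : IsKHKStep ε A n q u v) (x : Fin 3 → R) :
    x ⬝ᵥ v - x ⬝ᵥ q = ε * (x ⬝ᵥ q ⨯₃ u + x ⬝ᵥ v ⨯₃ n) := by
  rw [← dotProduct_sub, h.position, dotProduct_smul, dotProduct_add, smul_eq_mul]

theorem dotProduct_momentum_sub (h : IsKHKStep ε A n q u v) (x : Fin 3 → R) :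
    ε * (q ⬝ᵥ q) * (x ⬝ᵥ u - x ⬝ᵥ n) =
      x ⬝ᵥ q ⨯₃ (cayleyMatrix ε A q *ᵥ v) + x ⬝ᵥ v ⨯₃ (cayleyMatrix ε A q *ᵥ q) := by
  rw [← dotProduct_sub, h.momentum]
  simp only [cayleyMatrix_mulVec, map_add, map_smul, ← cross_anticomm v q,
    dotProduct_add, dotProduct_smul, dotProduct_neg, smul_eq_mul]
  ring

theorem dotProduct_cross_momentum (h : IsKHKStep ε A n q u v) (x : Fin 3 → R) :
    x ⬝ᵥ q ⨯₃ u = x ⬝ᵥ q ⨯₃ n + ε * ((x ⬝ᵥ q) * (q ⬝ᵥ A *ᵥ v) - (q ⬝ᵥ q) * (x ⬝ᵥ A *ᵥ v)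
      + (x ⬝ᵥ v) * (q ⬝ᵥ A *ᵥ q) - (q ⬝ᵥ v) * (x ⬝ᵥ A *ᵥ q)) := by
  rw [← add_sub_cancel n u, h.momentum]
  simp only [map_add, map_smul, cross_cross_eq_smul_sub_smul', dotProduct_add, dotProduct_sub,
    dotProduct_smul, smul_eq_mul, dotProduct_comm v q]
  ring

theorem cayleyMatrix_mulVec_next (hA : A.IsSymm) (h : IsKHKStep ε A n q u v) :
    cayleyMatrix ε A q *ᵥ v =
      cayleyMatrix ε A q *ᵥ q + ε • ((v + q) ⨯₃ halfStepMomentum ε A n q) := by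
  have hu : u = n + ε • (q ⨯₃ (A *ᵥ v) + v ⨯₃ (A *ᵥ q)) := by
    rw [← h.momentum, add_sub_cancel]
  have hv : v - q = ε • (q ⨯₃ u + v ⨯₃ n) := h.position
  simp only [hu, cayleyMatrix_mulVec, halfStepMomentum, map_add, map_smul,
    LinearMap.add_apply, cross_cross_eq_smul_sub_smul', dotProduct_mulVec_comm_of_isSymm hA v q,
    dotProduct_comm v q] at hv ⊢
  linear_combination (norm := module) hv

theorem cayleyMatrix_mulVec_prev (hA : A.IsSymm) (h : IsKHKStep ε A m p n q) :
    cayleyMatrix ε A q *ᵥ p =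
      cayleyMatrix ε A q *ᵥ q - ε • ((p + q) ⨯₃ halfStepMomentum (-ε) A n q) := by
  simpa only [cayleyMatrix_neg, neg_smul, ← sub_eq_add_neg] using
    h.symm.cayleyMatrix_mulVec_next hA

theorem dotProduct_prev_mul_eq_dotProduct_next_mul [NoZeroDivisors R] [NeZero (2 : R)]
    (hA : A.IsSymm) (h₁ : IsKHKStep ε A m p n q) (h₂ : IsKHKStep ε A n q u v) :
    (q ⬝ᵥ p) * (1 + ε ^ 2 * (v ⬝ᵥ A *ᵥ q)) = (q ⬝ᵥ v) * (1 + ε ^ 2 * (p ⬝ᵥ A *ᵥ q)) := by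
  have hqp : q ⬝ᵥ p - q ⬝ᵥ q = ε * (p ⬝ᵥ q ⨯₃ n) := by
    rw [h₁.symm.dotProduct_position_sub, dot_self_cross, dotProduct_cross_swap]
    ring
  have hqv : q ⬝ᵥ v - q ⬝ᵥ q = -ε * (v ⬝ᵥ q ⨯₃ n) := by
    rw [h₂.dotProduct_position_sub, dot_self_cross, dotProduct_cross_swap]
    ring
  have hpv : p ⬝ᵥ v - q ⬝ᵥ p = ε * (p ⬝ᵥ q ⨯₃ u - v ⬝ᵥ p ⨯₃ n) := by
    rw [dotProduct_comm q p, h₂.dotProduct_position_sub, dotProduct_cross_swap p v, sub_eq_add_neg]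
  have hvp : p ⬝ᵥ v - q ⬝ᵥ v = -ε * (v ⬝ᵥ q ⨯₃ m + v ⬝ᵥ p ⨯₃ n) := by
    rw [dotProduct_comm p v, dotProduct_comm q v, h₁.symm.dotProduct_position_sub]
  have hu : p ⬝ᵥ q ⨯₃ u = p ⬝ᵥ q ⨯₃ n + ε * ((q ⬝ᵥ p) * (v ⬝ᵥ A *ᵥ q)
      - (q ⬝ᵥ q) * (p ⬝ᵥ A *ᵥ v) + (p ⬝ᵥ v) * (q ⬝ᵥ A *ᵥ q) - (q ⬝ᵥ v) * (p ⬝ᵥ A *ᵥ q)) := by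
    rw [h₂.dotProduct_cross_momentum, dotProduct_comm p q, dotProduct_mulVec_comm_of_isSymm hA q v]
  have hm : v ⬝ᵥ q ⨯₃ m = v ⬝ᵥ q ⨯₃ n - ε * ((q ⬝ᵥ v) * (p ⬝ᵥ A *ᵥ q)
      - (q ⬝ᵥ q) * (p ⬝ᵥ A *ᵥ v) + (p ⬝ᵥ v) * (q ⬝ᵥ A *ᵥ q) - (q ⬝ᵥ p) * (v ⬝ᵥ A *ᵥ q)) := by
    rw [h₁.symm.dotProduct_cross_momentum, dotProduct_comm v q, dotProduct_comm v p,
      dotProduct_mulVec_comm_of_isSymm hA q p, dotProduct_mulVec_comm_of_isSymm hA v p]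
    ring
  refine mul_left_cancel₀ (two_ne_zero' R) ?_
  linear_combination hvp - hpv + hqp - hqv - ε * hu - ε * hm

theorem dotProduct_prev_mul_cayley_eq_dotProduct_next_mul_cayley [NoZeroDivisors R]
    [NeZero (2 : R)] (hA : A.IsSymm) (h₁ : IsKHKStep ε A m p n q) (h₂ : IsKHKStep ε A n q u v) :
    (q ⬝ᵥ p) * ((v + q) ⬝ᵥ cayleyMatrix ε A q *ᵥ q) =
      (q ⬝ᵥ v) * ((p + q) ⬝ᵥ cayleyMatrix ε A q *ᵥ q) := by
  simp only [cayleyMatrix_mulVec, add_dotProduct, dotProduct_add, dotProduct_smul, smul_eq_mul,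
    dotProduct_comm p q, dotProduct_comm v q]
  linear_combination (q ⬝ᵥ q) * h₁.dotProduct_prev_mul_eq_dotProduct_next_mul hA h₂

theorem dotProduct_momentum_sub_next (hA : A.IsSymm) (h : IsKHKStep ε A n q u v)
    (x : Fin 3 → R) :
    ε * (q ⬝ᵥ q) * (x ⬝ᵥ u - x ⬝ᵥ n) =
      x ⬝ᵥ (v + q) ⨯₃ (cayleyMatrix ε A q *ᵥ q)
        + ε * ((q ⬝ᵥ n) * (x ⬝ᵥ (v + q)) - (q ⬝ᵥ (v + q)) * (x ⬝ᵥ halfStepMomentum ε A n q)) := by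
  rw [h.dotProduct_momentum_sub, h.cayleyMatrix_mulVec_next hA]
  simp only [map_add, map_smul, LinearMap.add_apply, cross_cross_eq_smul_sub_smul',
    self_dotProduct_halfStepMomentum, dotProduct_add, dotProduct_sub, dotProduct_smul,
    smul_eq_mul, dotProduct_comm v q]
  ring

theorem dotProduct_momentum_sub_prev (hA : A.IsSymm) (h : IsKHKStep ε A m p n q)
    (x : Fin 3 → R) :
    -ε * (q ⬝ᵥ q) * (x ⬝ᵥ m - x ⬝ᵥ n) =
      x ⬝ᵥ (p + q) ⨯₃ (cayleyMatrix ε A q *ᵥ q)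
        - ε * ((q ⬝ᵥ n) * (x ⬝ᵥ (p + q))
          - (q ⬝ᵥ (p + q)) * (x ⬝ᵥ halfStepMomentum (-ε) A n q)) := by
  rw [h.symm.dotProduct_momentum_sub_next hA, cayleyMatrix_neg]
  ring

theorem dotProduct_self_mul_wronskian [NoZeroDivisors R] (hε : ε ≠ 0) (hA : A.IsSymm)
    (h₁ : IsKHKStep ε A m p n q) (h₂ : IsKHKStep ε A n q u v) :
    (q ⬝ᵥ q) * (p ⬝ᵥ u - v ⬝ᵥ m) =
      (q ⬝ᵥ p) * ((v + q) ⬝ᵥ halfStepMomentum (-ε) A n q)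
        - (q ⬝ᵥ v) * ((p + q) ⬝ᵥ halfStepMomentum ε A n q) := by
  have hu := h₂.dotProduct_momentum_sub_next hA p
  have hm := h₁.dotProduct_momentum_sub_prev hA v
  have hp := dotProduct_halfStepMomentum_sub ε A n q p
  have hv := dotProduct_halfStepMomentum_sub (-ε) A n q v
  rw [cayleyMatrix_neg] at hv
  have hswap := dotProduct_cross_swap p v (cayleyMatrix ε A q *ᵥ q)
  simp only [map_add, LinearMap.add_apply, add_dotProduct, dotProduct_add,
    self_dotProduct_halfStepMomentum, dotProduct_comm p q, dotProduct_comm v q,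
    dotProduct_comm v p] at hu hm ⊢
  refine mul_left_cancel₀ hε ?_
  linear_combination hu + hm - hp - hv + hswap

theorem cayleyMatrix_mulVec_next_dotProduct_halfStepMomentum (hA : A.IsSymm)
    (h : IsKHKStep ε A n q u v) :
    (cayleyMatrix ε A q *ᵥ v) ⬝ᵥ halfStepMomentum ε A n q =
      (cayleyMatrix ε A q *ᵥ q) ⬝ᵥ n := by
  rw [h.cayleyMatrix_mulVec_next hA, add_dotProduct,
    cayleyMatrix_mulVec_dotProduct_halfStepMomentum, smul_dotProduct,
    dotProduct_comm (_ ⨯₃ _), dot_cross_self, smul_zero, add_zero]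

theorem cayleyMatrix_mulVec_prev_dotProduct_halfStepMomentum (hA : A.IsSymm)
    (h : IsKHKStep ε A m p n q) :
    (cayleyMatrix ε A q *ᵥ p) ⬝ᵥ halfStepMomentum (-ε) A n q =
      (cayleyMatrix ε A q *ᵥ q) ⬝ᵥ n := by
  simpa only [cayleyMatrix_neg] using
    h.symm.cayleyMatrix_mulVec_next_dotProduct_halfStepMomentum hA

theorem cayleyMatrix_mulVec_next_dotProduct_cross (hA : A.IsSymm) (h : IsKHKStep ε A n q u v)
    (x : Fin 3 → R) :
    (cayleyMatrix ε A q *ᵥ v) ⬝ᵥ x ⨯₃ (cayleyMatrix ε A q *ᵥ q) =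
      ε * (((v + q) ⬝ᵥ x) * ((cayleyMatrix ε A q *ᵥ q) ⬝ᵥ n)
        - ((v + q) ⬝ᵥ cayleyMatrix ε A q *ᵥ q) * (x ⬝ᵥ halfStepMomentum ε A n q)) := by
  rw [h.cayleyMatrix_mulVec_next hA, add_dotProduct, dot_cross_self, zero_add, smul_dotProduct,
    cross_dot_cross, dotProduct_comm (halfStepMomentum ε A n q) (_ *ᵥ _),
    cayleyMatrix_mulVec_dotProduct_halfStepMomentum, dotProduct_comm (halfStepMomentum ε A n q) x,
    smul_eq_mul]

theorem cayleyMatrix_mulVec_prev_dotProduct_cross (hA : A.IsSymm) (h : IsKHKStep ε A m p n q)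
    (x : Fin 3 → R) :
    (cayleyMatrix ε A q *ᵥ p) ⬝ᵥ x ⨯₃ (cayleyMatrix ε A q *ᵥ q) =
      -ε * (((p + q) ⬝ᵥ x) * ((cayleyMatrix ε A q *ᵥ q) ⬝ᵥ n)
        - ((p + q) ⬝ᵥ cayleyMatrix ε A q *ᵥ q) * (x ⬝ᵥ halfStepMomentum (-ε) A n q)) := by
  simpa only [cayleyMatrix_neg] using h.symm.cayleyMatrix_mulVec_next_dotProduct_cross hA x

theorem dotProduct_self_mul_cayley_wronskian [NoZeroDivisors R] (hε : ε ≠ 0) (hA : A.IsSymm)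
    (h₁ : IsKHKStep ε A m p n q) (h₂ : IsKHKStep ε A n q u v) :
    (q ⬝ᵥ q) * ((cayleyMatrix ε A q *ᵥ p) ⬝ᵥ u - (cayleyMatrix ε A q *ᵥ v) ⬝ᵥ m) =
      ((p + q) ⬝ᵥ cayleyMatrix ε A q *ᵥ q) * ((v + q) ⬝ᵥ halfStepMomentum (-ε) A n q)
        - ((v + q) ⬝ᵥ cayleyMatrix ε A q *ᵥ q) * ((p + q) ⬝ᵥ halfStepMomentum ε A n q) := by
  set D := cayleyMatrix ε A q
  have hu : ε * (q ⬝ᵥ q) * ((D *ᵥ p) ⬝ᵥ u - (D *ᵥ p) ⬝ᵥ n) =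
      (D *ᵥ p) ⬝ᵥ q ⨯₃ (D *ᵥ v) + (D *ᵥ p) ⬝ᵥ v ⨯₃ (D *ᵥ q) :=
    h₂.dotProduct_momentum_sub (D *ᵥ p)
  have hm : -ε * (q ⬝ᵥ q) * ((D *ᵥ v) ⬝ᵥ m - (D *ᵥ v) ⬝ᵥ n) =
      -((D *ᵥ p) ⬝ᵥ q ⨯₃ (D *ᵥ v)) + (D *ᵥ v) ⬝ᵥ p ⨯₃ (D *ᵥ q) := by
    rw [h₁.symm.dotProduct_momentum_sub, cayleyMatrix_neg, triple_product_permutation,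
      dotProduct_cross_swap, triple_product_permutation (D *ᵥ p)]
  have hp : -ε * (q ⬝ᵥ q) * ((D *ᵥ q) ⬝ᵥ n - (D *ᵥ p) ⬝ᵥ n) = (D *ᵥ p) ⬝ᵥ q ⨯₃ (D *ᵥ q) := by
    rw [← h₁.cayleyMatrix_mulVec_prev_dotProduct_halfStepMomentum hA,
      dotProduct_halfStepMomentum_sub, cayleyMatrix_neg]
  have hv : ε * (q ⬝ᵥ q) * ((D *ᵥ q) ⬝ᵥ n - (D *ᵥ v) ⬝ᵥ n) = (D *ᵥ v) ⬝ᵥ q ⨯₃ (D *ᵥ q) := by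
    rw [← h₂.cayleyMatrix_mulVec_next_dotProduct_halfStepMomentum hA,
      dotProduct_halfStepMomentum_sub]
  have hpa := h₁.cayleyMatrix_mulVec_prev_dotProduct_cross hA (v + q)
  have hvb := h₂.cayleyMatrix_mulVec_next_dotProduct_cross hA (p + q)
  rw [dotProduct_comm (v + q) (p + q)] at hvb
  simp only [map_add crossProduct, LinearMap.add_apply, dotProduct_add (_ *ᵥ _)] at hpa hvb
  refine mul_left_cancel₀ hε ?_
  linear_combination hu + hm + hp + hv + hpa + hvb

theorem next_position_eq_zero {K : Type*} [CommRing K] [LinearOrder K] [IsStrictOrderedRing K]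
    {ε : K} {A : Matrix (Fin 3) (Fin 3) K} {n u v : Fin 3 → K} (h : IsKHKStep ε A n 0 u v) :
    v = 0 := by
  rw [← dotProduct_self_eq_zero]
  simpa only [dotProduct_zero, zero_dotProduct, map_zero, LinearMap.zero_apply, zero_add, sub_zero,
    dot_self_cross, mul_zero] using h.dotProduct_position_sub v

end IsKHKStep

end CommRing

theorem clebsch1_second_order_wronskian_basis_general {K : Type*} [CommRing K] [LinearOrder K]
    [IsStrictOrderedRing K] {ε : K} {A : Matrix (Fin 3) (Fin 3) K} {m p n q u v : Fin 3 → K}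
    (hA : A.IsSymm) (h₁ : IsKHKStep ε A m p n q) (h₂ : IsKHKStep ε A n q u v) :
    (wronskianPencil ε A p q *ᵥ p) ⬝ᵥ u - (wronskianPencil ε A p q *ᵥ v) ⬝ᵥ m = 0 := by
  rcases eq_or_ne ε 0 with rfl | hε
  · have hp : q = p := by simpa only [zero_smul, sub_eq_zero] using h₁.position
    have hm : n = m := by simpa only [zero_smul, sub_eq_zero] using h₁.momentum
    have hv : v = q := by simpa only [zero_smul, sub_eq_zero] using h₂.position
    have hu : u = n := by simpa only [zero_smul, sub_eq_zero] using h₂.momentum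
    rw [hv, hu, hp, hm, sub_self]
  rcases eq_or_ne q 0 with rfl | hq
  · rw [h₁.symm.next_position_eq_zero, h₂.next_position_eq_zero]
    simp only [mulVec_zero, zero_dotProduct, sub_zero]
  have hqq : q ⬝ᵥ q ≠ 0 := dotProduct_self_eq_zero.not.mpr hq
  have hp := congrArg (· ⬝ᵥ u) (dotProduct_self_smul_wronskianPencil_mulVec ε A p q p)
  have hv := congrArg (· ⬝ᵥ m) (dotProduct_self_smul_wronskianPencil_mulVec ε A p q v)
  simp only [smul_dotProduct, sub_dotProduct, smul_eq_mul] at hp hv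
  have hratio := h₁.dotProduct_prev_mul_cayley_eq_dotProduct_next_mul_cayley hA h₂
  have hwronskian := h₁.dotProduct_self_mul_wronskian hε hA h₂
  have hcayley := h₁.dotProduct_self_mul_cayley_wronskian hε hA h₂
  refine (mul_eq_zero.mp ?_).resolve_left (mul_ne_zero hqq hqq)
  linear_combination (q ⬝ᵥ q) * (hp - hv)
    + ((p + q) ⬝ᵥ cayleyMatrix ε A q *ᵥ q) * hwronskian - (q ⬝ᵥ p) * hcayley
    + ((p + q) ⬝ᵥ halfStepMomentum ε A n q) * hratio

theorem Clebsch1KHK.isKHKStep {ε ω1 ω2 ω3 m1 m2 m3 p1 p2 p3 n1 n2 n3 q1 q2 q3 : ℝ}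
    (h : Clebsch1KHK ε ω1 ω2 ω3 m1 m2 m3 p1 p2 p3 n1 n2 n3 q1 q2 q3) :
    IsKHKStep ε (diagonal ![ω1, ω2, ω3]) ![m1, m2, m3] ![p1, p2, p3] ![n1, n2, n3]
      ![q1, q2, q3] := by
  obtain ⟨hm₁, hm₂, hm₃, hp₁, hp₂, hp₃⟩ := h
  constructor <;> ext i <;> fin_cases i <;>
    simp only [Fin.zero_eta, Fin.mk_one, Fin.reduceFinMk, Pi.sub_apply, Pi.smul_apply,
      Pi.add_apply, smul_eq_mul, cross_apply, mulVec_diagonal, cons_val]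
  · linear_combination hm₁
  · linear_combination hm₂
  · linear_combination hm₃
  · linear_combination hp₁
  · linear_combination hp₂
  · linear_combination hp₃

theorem wronskianPencil_diagonal (ε ω1 ω2 ω3 p1 p2 p3 q1 q2 q3 : ℝ) :
    wronskianPencil ε (diagonal ![ω1, ω2, ω3]) ![p1, p2, p3] ![q1, q2, q3] =
      diagonal ![C1 ε ω1 ω2 ω3 p1 p2 p3 q1 q2 q3, C2 ε ω1 ω2 ω3 p1 p2 p3 q1 q2 q3,
        C3 ε ω1 ω2 ω3 p1 p2 p3 q1 q2 q3] := by
  rw [wronskianPencil, ← diagonal_one, ← diagonal_smul, ← diagonal_smul, diagonal_sub,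
    diagonal_eq_diagonal_iff]
  intro i
  fin_cases i <;>
    simp only [Fin.zero_eta, Fin.mk_one, Fin.reduceFinMk, Pi.smul_apply, smul_eq_mul,
      vec3_dotProduct, mulVec_diagonal, cons_val, C1, C2, C3] <;>
    ring

/-- Second order discrete Wronskians HK basis for the first Clebsch flow (Theorem 12):
`C₁(p,p̃)(m̿₁p₁−m₁p̿₁) + C₂(p,p̃)(m̿₂p₂−m₂p̿₂) + C₃(p,p̃)(m̿₃p₃−m₃p̿₃) = 0`. -/
theorem clebsch1_second_order_wronskian_basis
    (ε ω1 ω2 ω3 m1 m2 m3 p1 p2 p3 n1 n2 n3 q1 q2 q3 u1 u2 u3 v1 v2 v3 : ℝ)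
    (hK1 : Clebsch1KHK ε ω1 ω2 ω3 m1 m2 m3 p1 p2 p3 n1 n2 n3 q1 q2 q3)
    (hK2 : Clebsch1KHK ε ω1 ω2 ω3 n1 n2 n3 q1 q2 q3 u1 u2 u3 v1 v2 v3) :
    C1 ε ω1 ω2 ω3 p1 p2 p3 q1 q2 q3 * (u1 * p1 - m1 * v1)
    + C2 ε ω1 ω2 ω3 p1 p2 p3 q1 q2 q3 * (u2 * p2 - m2 * v2)
    + C3 ε ω1 ω2 ω3 p1 p2 p3 q1 q2 q3 * (u3 * p3 - m3 * v3) = 0 := by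
  have h := clebsch1_second_order_wronskian_basis_general (isSymm_diagonal _)
    hK1.isKHKStep hK2.isKHKStep
  simp only [wronskianPencil_diagonal, mulVec_diagonal, vec3_dotProduct, cons_val] at h
  linear_combination h
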